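/- arXiv:1701.06082 — 8 statements merged into one kernel-verified Lean document; each statement's English description precedes it below -/
import Mathlib

section
/- Let R be a commutative ring with identity, M a unitary R-module, and N a complementary submodule of M. If (N : M) is a primal ideal of R, then N is a primal submodule of M. -/
/-- `S(N)` for a submodule `N` of `M`: the set of elements of `R` not prime to `N`. -/
def notPrimeTo {R : Type*} [CommRing R] {M : Type*} [AddCommGroup M] [Module R M]
    (N : Submodule R M) : Set R :=
  {r : R | ∃ m : M, m ∉ N ∧ r • m ∈ N}

/-- `S(I)` for an ideal `I` of `R`. -/
def notPrimeToIdeal {R : Type*} [CommRing R] (I : Ideal R) : Set R :=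
  {r : R | ∃ s : R, s ∉ I ∧ r * s ∈ I}

/-- A proper submodule `N` of `M` is *primal* if `S(N)` forms an ideal of `R`. -/
def IsPrimalSubmodule {R : Type*} [CommRing R] {M : Type*} [AddCommGroup M] [Module R M]
    (N : Submodule R M) : Prop :=
  N ≠ ⊤ ∧ ∃ I : Ideal R, (I : Set R) = notPrimeTo N

/-- A proper ideal `I` of `R` is *primal* if `S(I)` forms an ideal of `R`. -/
def IsPrimalIdeal {R : Type*} [CommRing R] (I : Ideal R) : Prop :=
  I ≠ ⊤ ∧ ∃ J : Ideal R, (J : Set R) = notPrimeToIdeal I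

/-- A proper submodule `N` of `M` is *complementary* if whenever `r • x ∉ N` for some
`x ∉ N`, then `r • y ∉ N` for all `y ∉ N`. -/
def IsComplementarySubmodule {R : Type*} [CommRing R] {M : Type*} [AddCommGroup M] [Module R M]
    (N : Submodule R M) : Prop :=
  N ≠ ⊤ ∧ ∀ r : R, (∃ x : M, x ∉ N ∧ r • x ∉ N) → ∀ y : M, y ∉ N → r • y ∉ N

/-- Proposition 3.6: if `N` is a complementary submodule of `M` and `(N : M)` is a primal
ideal of `R`, then `N` is a primal submodule of `M`. -/
theorem isPrimalSubmodule_of_complementary {R : Type*} [CommRing R] {M : Type*}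
    [AddCommGroup M] [Module R M] (N : Submodule R M) (hc : IsComplementarySubmodule N)
    (h : IsPrimalIdeal (N.colon ⊤)) : IsPrimalSubmodule N := by
  refine ⟨hc.1, N.colon ⊤, ?_⟩
  ext r
  simp only [SetLike.mem_coe, Submodule.mem_colon, notPrimeTo, Set.mem_setOf_eq]
  constructor
  · intro hr
    obtain ⟨m, hm⟩ : ∃ m, m ∉ N := by
      by_contra hcon
      push Not at hcon
      exact hc.1 (eq_top_iff.2 fun x _ => hcon x)
    exact ⟨m, hm, hr m trivial⟩
  · rintro ⟨m, hm, hrm⟩ x _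
    by_contra hx
    exact hc.2 r ⟨x, fun hxN => hx (N.smul_mem r hxN), hx⟩ m hm hrm
end

section
/- Let R be a commutative ring with identity, M a unitary R-module, and N a complementary submodule of M. Then N is a primal submodule of M if and only if (N : M) is a primal ideal of R. -/
/-- Corollary 3.7: a complementary submodule `N` of `M` is primal iff `(N : M)` is a
primal ideal of `R`. -/
theorem isPrimalSubmodule_iff_isPrimalIdeal_colon {R : Type*} [CommRing R] {M : Type*}
    [AddCommGroup M] [Module R M] (N : Submodule R M) (hc : IsComplementarySubmodule N) :
    IsPrimalSubmodule N ↔ IsPrimalIdeal (N.colon ⊤) := by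
  have hS : ∀ r : R, ∀ y : M, y ∉ N → r • y ∈ N → ∀ x : M, r • x ∈ N := by
    intro r y hy hry x
    by_contra hx
    exact hc.2 r ⟨x, fun h => hx (N.smul_mem r h), hx⟩ y hy hry
  have hmem : ∀ r : R, r ∈ N.colon ⊤ ↔ ∀ x : M, r • x ∈ N := by
    intro r
    rw [Submodule.mem_colon]
    exact ⟨fun h x => h x trivial, fun h x _ => h x⟩
  obtain ⟨m, hm⟩ : ∃ m : M, m ∉ N := by
    by_contra h
    push Not at h
    exact hc.1 (eq_top_iff.2 fun x _ => h x)
  have h1 : (1 : R) ∉ N.colon ⊤ := by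
    rw [hmem]
    intro h
    exact hm (by simpa using h m)
  constructor
  · intro _
    refine ⟨fun h => h1 (h ▸ Submodule.mem_top), N.colon ⊤, ?_⟩
    ext r
    constructor
    · intro hr
      exact ⟨1, h1, by rw [mul_one]; exact hr⟩
    · rintro ⟨s, hs, hrs⟩
      rw [hmem] at hs hrs
      push Not at hs
      obtain ⟨x, hx⟩ := hs
      exact (hmem r).2 (hS r (s • x) hx (by rw [smul_smul]; exact hrs x))
  · intro _
    refine ⟨hc.1, N.colon ⊤, ?_⟩
    ext r
    constructor
    · intro hr
      exact ⟨m, hm, (hmem r).1 hr m⟩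
    · rintro ⟨y, hy, hry⟩
      exact (hmem r).2 (hS r y hy hry)
end

section
/- Let R be a commutative ring with identity, M a unitary R-module, S a multiplicative closed set in R, and N a proper submodule of M such that S(N) ∩ S = ∅. Then the set of elements of R_S not prime to the localized submodule N_S equals the localization of S(N); that is, S(N_S) = (S(N))_S as subsets of R_S. -/
theorem mk_mem_localized_aux {R : Type*} [CommRing R] {M : Type*} [AddCommGroup M]
    [Module R M] (S : Submonoid R) (N : Submodule R M)
    (hS : notPrimeTo N ∩ (S : Set R) = ∅) (m : M) (s : S) :
    LocalizedModule.mk m s ∈ N.localized S ↔ m ∈ N := by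
  have key : ∀ (t : S) (x : M), (t : R) • x ∈ N → x ∈ N := by
    intro t x hx
    by_contra h
    have : (t : R) ∈ notPrimeTo N ∩ (S : Set R) := ⟨⟨x, h, hx⟩, t.2⟩
    rw [hS] at this
    exact this
  rw [Submodule.mem_localized']
  constructor
  · rintro ⟨n, hn, t, h⟩
    rw [← IsLocalizedModule.mk_eq_mk', LocalizedModule.mk_eq] at h
    obtain ⟨u, hu⟩ := h
    apply key t
    apply key u
    change u • t • m ∈ N
    rw [← hu]
    exact N.smul_mem (u : R) (N.smul_mem (s : R) hn)
  · intro h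
    exact ⟨m, h, s, (IsLocalizedModule.mk_eq_mk' s m).symm⟩

/-- Theorem 3.10: let `S` be a multiplicative closed set in `R` and `N` a proper submodule
of `M` with `S(N) ∩ S = ∅`.  Then `S(N_S) = (S(N))_S` as subsets of `R_S`, where
`N_S = N.localized S` is the localized submodule `{n/s : n ∈ N, s ∈ S}` of `M_S` and
`(S(N))_S = {r/s : r ∈ S(N), s ∈ S}`. -/
theorem notPrimeTo_localized_eq {R : Type*} [CommRing R] {M : Type*} [AddCommGroup M]
    [Module R M] (S : Submonoid R) (N : Submodule R M) (hN : N ≠ ⊤)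
    (hS : notPrimeTo N ∩ (S : Set R) = ∅) :
    notPrimeTo (N.localized S) =
      {x : Localization S | ∃ r ∈ notPrimeTo N, ∃ s : S, x = Localization.mk r s} := by
  ext x
  constructor
  · rintro ⟨y, hy, hxy⟩
    induction x using Localization.induction_on with | _ p
    obtain ⟨r, s⟩ := p
    induction y using LocalizedModule.induction_on with | _ m t
    rw [LocalizedModule.mk_smul_mk, mk_mem_localized_aux S N hS] at hxy
    rw [mk_mem_localized_aux S N hS] at hy
    exact ⟨r, ⟨m, hy, hxy⟩, s, rfl⟩
  · rintro ⟨r, ⟨m, hm, hrm⟩, s, rfl⟩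
    refine ⟨LocalizedModule.mk m 1, ?_, ?_⟩
    · rwa [mk_mem_localized_aux S N hS]
    · rwa [LocalizedModule.mk_smul_mk, mk_mem_localized_aux S N hS]
end

section
/- Let R be a commutative ring with identity, M a unitary R-module, S a multiplicative closed set in R, and N a proper submodule of M such that (N : s) = N for all s ∈ S, where (N : s) = {x ∈ M : s·x ∈ N}. Then N is a prime submodule of M if and only if N_S is a prime submodule of the R_S-module M_S. -/
/-- A proper submodule `N` of `M` is *prime* if whenever `r • m ∈ N` with `r : R`, `m : M`,
then `m ∈ N` or `r • M ⊆ N` (i.e. `r ∈ N.colon ⊤`). -/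
def IsPrimeSubmodule {R : Type*} [CommRing R] {M : Type*} [AddCommGroup M] [Module R M]
    (N : Submodule R M) : Prop :=
  N ≠ ⊤ ∧ ∀ (r : R) (m : M), r • m ∈ N → m ∈ N ∨ r ∈ N.colon ⊤

/-- Proposition 3.13: let `S` be a multiplicative closed set in `R` and `N` a proper
submodule of `M` such that `(N : s) = N` for all `s ∈ S`, where
`(N : s) = {x ∈ M : s • x ∈ N}`.  Then `N` is a prime submodule of `M` iff
`N_S = N.localized S` is a prime submodule of the `R_S`-module `M_S`. -/
theorem isPrimeSubmodule_iff_localized {R : Type*} [CommRing R] {M : Type*} [AddCommGroup M]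
    [Module R M] (S : Submonoid R) (N : Submodule R M) (hN : N ≠ ⊤)
    (hcol : ∀ s ∈ S, {x : M | s • x ∈ N} = (N : Set M)) :
    IsPrimeSubmodule N ↔ IsPrimeSubmodule (N.localized S) := by
  have hc : ∀ (s : S) (x : M), (s : R) • x ∈ N ↔ x ∈ N := fun s x => by
    have := Set.ext_iff.mp (hcol s s.2) x
    simpa using this
  have key : ∀ (m : M) (s : S), LocalizedModule.mk m s ∈ N.localized S ↔ m ∈ N := by
    intro m s
    constructor
    · intro h
      obtain ⟨n, hn, t, h⟩ := (Submodule.mem_localized' _ _ _ _ _).1 h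
      rw [← IsLocalizedModule.mk_eq_mk', LocalizedModule.mk_eq] at h
      obtain ⟨u, hu⟩ := h
      rw [← hc t, ← hc u]
      have h2 : (u : R) • (t : R) • m = (u : R) • (s : R) • n := hu.symm
      rw [h2]
      exact N.smul_mem _ (N.smul_mem _ hn)
    · intro h
      exact (Submodule.mem_localized' _ _ _ _ _).2
        ⟨m, h, s, (IsLocalizedModule.mk_eq_mk' s m).symm⟩
  constructor
  · rintro ⟨-, hp⟩
    refine ⟨fun h => hN ?_, ?_⟩
    · rw [eq_top_iff]
      intro x _
      rw [← key x 1, h]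
      trivial
    · intro r m
      induction m using LocalizedModule.induction_on with | _ m s
      induction r using Localization.induction_on with | _ y
      obtain ⟨r, t⟩ := y
      intro h
      rw [LocalizedModule.mk_smul_mk, key] at h
      rcases hp r m h with h | h
      · exact Or.inl ((key _ _).2 h)
      · refine Or.inr (Submodule.mem_colon.2 fun x _ => ?_)
        induction x using LocalizedModule.induction_on with | _ x u
        rw [LocalizedModule.mk_smul_mk, key]
        exact Submodule.mem_colon.1 h x trivial
  · rintro ⟨-, hp⟩
    refine ⟨hN, fun r m h => ?_⟩
    rcases hp (Localization.mk r 1) (LocalizedModule.mk m 1)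
      (by rw [LocalizedModule.mk_smul_mk, key]; exact h) with h | h
    · exact Or.inl ((key _ _).1 h)
    · refine Or.inr (Submodule.mem_colon.2 fun x _ => ?_)
      have := Submodule.mem_colon.1 h (LocalizedModule.mk x 1) trivial
      rwa [LocalizedModule.mk_smul_mk, key] at this
end

section
/- Let R be a commutative ring with identity, M a unitary R-module, S a multiplicative closed set in R, and N a proper submodule of M. Suppose that for each proper submodule K of M and each s ∈ S, (K : s) = K, where (K : s) = {x ∈ M : s·x ∈ K}. Then N is small in M if and only if N_S is small in M_S. -/
/-- A submodule `N` of `M` is *small* (superfluous) in `M`, written `N ≪ M`, if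
`N + L ≠ M` for every proper submodule `L` of `M`. -/
def IsSmallSubmodule {R : Type*} [CommRing R] {M : Type*} [AddCommGroup M] [Module R M]
    (N : Submodule R M) : Prop :=
  ∀ L : Submodule R M, L ≠ ⊤ → N ⊔ L ≠ ⊤

/-- Proposition 3.19 (1): let `S` be a multiplicative closed set in `R` and `N` a proper
submodule of `M`, and suppose `(K : s) = K` for every proper submodule `K` of `M` and every
`s ∈ S`, where `(K : s) = {x ∈ M : s • x ∈ K}`.  Then `N ≪ M` iff `N_S ≪ M_S`, where
`N_S = N.localized S`. -/
theorem isSmall_iff_localized {R : Type*} [CommRing R] {M : Type*} [AddCommGroup M]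
    [Module R M] (S : Submonoid R) (N : Submodule R M) (hN : N ≠ ⊤)
    (hcol : ∀ K : Submodule R M, K ≠ ⊤ → ∀ s ∈ S, {x : M | s • x ∈ K} = (K : Set M)) :
    IsSmallSubmodule N ↔ IsSmallSubmodule (N.localized S) := by
  have key : ∀ K : Submodule R M, ∀ s ∈ S, ∀ x : M, s • x ∈ K → x ∈ K := by
    intro K s hs x hx
    by_cases hK : K = ⊤
    · rw [hK]; trivial
    · have h : x ∈ {x : M | s • x ∈ K} := hx
      rw [hcol K hK s hs] at h
      exact h
  constructor
  · intro h L' hL' hsup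
    let f := LocalizedModule.mkLinearMap S M
    let L : Submodule R M := (L'.restrictScalars R).comap f
    have memL : ∀ x, x ∈ L ↔ f x ∈ L' := fun x => Iff.rfl
    refine h L ?_ ?_
    · intro hL
      apply hL'
      rw [eq_top_iff]
      rintro y -
      obtain ⟨⟨m, s⟩, rfl⟩ := IsLocalizedModule.mk'_surjective S f y
      have hm : f m ∈ L' := (memL m).1 (by rw [hL]; trivial)
      have := L'.smul_mem (IsLocalization.mk' (Localization S) (1 : R) s) hm
      rw [← IsLocalizedModule.mk'_one S f m, IsLocalizedModule.mk'_smul_mk'] at this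
      simpa using this
    · rw [eq_top_iff]
      rintro x -
      have hx : f x ∈ N.localized S ⊔ L' := by rw [hsup]; trivial
      obtain ⟨a, ha, l, hl, hal⟩ := Submodule.mem_sup.1 hx
      obtain ⟨n, hn, s, rfl⟩ := ha
      apply key _ s s.2
      have h1 : (s : R) • x - n ∈ L := by
        rw [memL, map_sub, map_smul, ← hal, smul_add]
        have : (s : R) • IsLocalizedModule.mk' (LocalizedModule.mkLinearMap S M) n s = f n :=
          IsLocalizedModule.mk'_cancel' f n s
        rw [this, add_sub_cancel_left]
        exact (L'.restrictScalars R).smul_mem _ hl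
      have := Submodule.add_mem_sup hn h1
      rwa [add_sub_cancel] at this
  · intro h L hL hsup
    let f := LocalizedModule.mkLinearMap S M
    refine h (L.localized S) ?_ ?_
    · intro hT
      apply hL
      rw [eq_top_iff]
      rintro x -
      have hx : f x ∈ L.localized S := by rw [hT]; trivial
      obtain ⟨l, hl, s, hs⟩ := hx
      have e : f l = f ((s : R) • x) := by
        rw [map_smul, ← hs]
        exact (IsLocalizedModule.mk'_cancel' f l s).symm
      obtain ⟨c, hc⟩ := IsLocalizedModule.exists_of_eq (S := S) e
      apply key L s s.2
      apply key L c c.2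
      have : (c : R) • l ∈ L := L.smul_mem _ hl
      have hc' : (c : R) • l = (c : R) • (s : R) • x := hc
      rwa [hc'] at this
    · rw [eq_top_iff]
      rintro y -
      obtain ⟨⟨m, s⟩, rfl⟩ := IsLocalizedModule.mk'_surjective S f y
      have hm : m ∈ N ⊔ L := by rw [hsup]; trivial
      obtain ⟨n, hn, l, hl, rfl⟩ := Submodule.mem_sup.1 hm
      simp only [Function.uncurry_apply_pair, IsLocalizedModule.mk'_add]
      exact Submodule.add_mem_sup ⟨n, hn, s, rfl⟩ ⟨l, hl, s, rfl⟩
end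

section
/- Let R be a commutative ring with identity, M a unitary R-module, S a multiplicative closed set in R, and N a proper submodule of M. Suppose that for each proper submodule K of M and each s ∈ S, (K : s) = K. If N is a supplement of some submodule L of M, then N_S is a supplement of L_S in M_S; hence N is a supplemented submodule of M implies N_S is a supplemented submodule of M_S. -/
/-- `X` is *small in* the submodule `L` (i.e. `X ≪ L`, viewing `X` as a submodule of `L`):
`X + Y ≠ L` for every submodule `Y` properly contained in `L`. -/
def IsSmallIn {R : Type*} [CommRing R] {M : Type*} [AddCommGroup M] [Module R M]
    (X L : Submodule R M) : Prop :=
  ∀ Y : Submodule R M, Y < L → X ⊔ Y ≠ L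

/-- `N` is a *supplement* of `L` in `M` if `N + L = M` and `N ∩ L ≪ N`. -/
def IsSupplementOf {R : Type*} [CommRing R] {M : Type*} [AddCommGroup M] [Module R M]
    (N L : Submodule R M) : Prop :=
  N ⊔ L = ⊤ ∧ IsSmallIn (N ⊓ L) N

/-- Proposition 3.19 (2): let `S` be a multiplicative closed set in `R` and `N` a proper
submodule of `M`, and suppose `(K : s) = K` for every proper submodule `K` of `M` and every
`s ∈ S`.  If `N` is a supplement of a submodule `L` of `M`, then `N_S` is a supplement of
`L_S` in `M_S`; hence if `N` is a supplemented submodule of `M` then `N_S` is a supplemented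
submodule of `M_S`. -/
theorem isSupplement_localized {R : Type*} [CommRing R] {M : Type*} [AddCommGroup M]
    [Module R M] (S : Submonoid R) (N : Submodule R M) (hN : N ≠ ⊤)
    (hcol : ∀ K : Submodule R M, K ≠ ⊤ → ∀ s ∈ S, {x : M | s • x ∈ K} = (K : Set M)) :
    (∀ L : Submodule R M, IsSupplementOf N L → IsSupplementOf (N.localized S) (L.localized S)) ∧
      ((∃ L : Submodule R M, IsSupplementOf N L) →
        ∃ L' : Submodule (Localization S) (LocalizedModule S M),
          IsSupplementOf (N.localized S) L') := by
  have gi := Submodule.localized'gi (Localization S) S (LocalizedModule.mkLinearMap S M)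
  have key : ∀ K : Submodule R M, K ≠ ⊤ → ∀ m : M,
      LocalizedModule.mkLinearMap S M m ∈ K.localized S → m ∈ K := by
    rintro K hK m ⟨k, hk, s, h⟩
    rw [IsLocalizedModule.mk'_eq_iff, Submonoid.smul_def, ← map_smul,
      IsLocalizedModule.eq_iff_exists S] at h
    obtain ⟨c, hc⟩ := h
    have h1 : c • s • m ∈ K := hc ▸ K.smul_of_tower_mem c hk
    have h2 : ((c * s : S) : R) • m ∈ K := by
      rw [← Submonoid.smul_def, mul_smul]; exact h1
    have h3 : m ∈ {x : M | ((c * s : S) : R) • x ∈ K} := h2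
    rw [hcol K hK _ (c * s).2] at h3
    exact h3
  have main : ∀ L : Submodule R M, IsSupplementOf N L →
      IsSupplementOf (N.localized S) (L.localized S) := by
    rintro L ⟨hsum, hsmall⟩
    refine ⟨?_, ?_⟩
    · rw [← gi.gc.l_sup, hsum, Submodule.localized'_top]
    · intro Y hY hE
      have hYl := gi.l_u_eq Y
      set Y0 : Submodule R M := (Y.restrictScalars R).comap (LocalizedModule.mkLinearMap S M)
        with hY0
      have hle : Y0 ≤ N := fun m hm => key N hN m (hY.le hm)
      have hlt : Y0 < N := by
        refine lt_of_le_of_ne hle fun h => hY.ne ?_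
        rw [← hYl, h]
      refine hsmall Y0 hlt ?_
      have hKN : (N ⊓ L) ⊔ Y0 ≤ N := sup_le inf_le_left hle
      refine le_antisymm hKN fun m hm => ?_
      refine key _ (fun h => hN (top_le_iff.mp (h ▸ hKN))) m ?_
      have e : ((N ⊓ L) ⊔ Y0).localized S = N.localized S := by
        rw [← hE, ← Submodule.localized'_inf]
        exact gi.gc.l_sup.trans (by rw [hYl])
      rw [e]
      exact ⟨m, hm, 1, by simp⟩
  exact ⟨main, fun ⟨L, hL⟩ => ⟨_, main L hL⟩⟩
end

section
/- Let R be a commutative ring with identity, M a unitary R-module, and S a multiplicative closed set in R. Suppose that for each proper submodule K of M and each s ∈ S, (K : s) = K. Then M is a hollow R-module if and only if M_S is a hollow R_S-module. -/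
/-- A module `M` is *hollow* if every proper submodule of `M` is small in `M`. -/
def IsHollowModule (R M : Type*) [CommRing R] [AddCommGroup M] [Module R M] : Prop :=
  ∀ N : Submodule R M, N ≠ ⊤ → IsSmallSubmodule N

/-- Proposition 3.19 (3): let `S` be a multiplicative closed set in `R`, and suppose
`(K : s) = K` for every proper submodule `K` of `M` and every `s ∈ S`.  Then `M` is a
hollow `R`-module iff `M_S` is a hollow `R_S`-module. -/
theorem isHollow_iff_localized {R : Type*} [CommRing R] {M : Type*} [AddCommGroup M]
    [Module R M] (S : Submonoid R)
    (hcol : ∀ K : Submodule R M, K ≠ ⊤ → ∀ s ∈ S, {x : M | s • x ∈ K} = (K : Set M)) :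
    IsHollowModule R M ↔ IsHollowModule (Localization S) (LocalizedModule S M) := by
  have gi := Submodule.localized'gi (Localization S) S (LocalizedModule.mkLinearMap S M)
  have key : ∀ K : Submodule R M, K.localized S = ⊤ → K = ⊤ := by
    intro K hK
    by_contra hne
    apply hne
    rw [eq_top_iff]
    intro x _
    have hx : LocalizedModule.mk x (1 : S) ∈ K.localized S := hK ▸ Submodule.mem_top
    obtain ⟨m, hm, s, hs⟩ := hx
    rw [← IsLocalizedModule.mk_eq_mk', LocalizedModule.mk_eq] at hs
    obtain ⟨u, hu⟩ := hs
    have h1 : ((u * s : S) : R) • x ∈ K := by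
      have h2 : u • s • x ∈ K := by
        rw [← hu, one_smul]
        exact K.smul_mem (u : R) hm
      rw [← mul_smul] at h2
      exact h2
    have h3 : x ∈ {x : M | ((u * s : S) : R) • x ∈ K} := h1
    rw [hcol K hne _ (u * s).2] at h3
    exact h3
  constructor
  · intro h N hN L hL hNL
    refine h ((N.restrictScalars R).comap (LocalizedModule.mkLinearMap S M)) (fun e => hN ?_)
      ((L.restrictScalars R).comap (LocalizedModule.mkLinearMap S M)) (fun e => hL ?_) (key _ ?_)
    · rw [← gi.l_u_eq N]; simp only [e]; exact Submodule.localized'_top ..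
    · rw [← gi.l_u_eq L]; simp only [e]; exact Submodule.localized'_top ..
    · exact gi.gc.l_sup.trans (by rw [gi.l_u_eq N, gi.l_u_eq L, hNL])
  · intro h N hN L hL hNL
    refine h (N.localized S) (fun e => hN (key _ e)) (L.localized S) (fun e => hL (key _ e)) ?_
    refine gi.gc.l_sup.symm.trans ?_
    rw [hNL]; exact Submodule.localized'_top ..
end

section
/- Let R be a commutative ring with identity, M a unitary R-module, and S a multiplicative closed set in R. Suppose that for each proper submodule K of M and each s ∈ S, (K : s) = K. Then M is a lifting R-module if and only if M_S is a lifting R_S-module. -/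
/-- A module `M` is *lifting* if for every submodule `N` of `M` there are submodules `K`, `L`
of `M` with `M = K ⊕ L` (i.e. `K + L = M` and `K ∩ L = 0`), `K ≤ N` and `N ∩ L ≪ L`. -/
def IsLiftingModule (R M : Type*) [CommRing R] [AddCommGroup M] [Module R M] : Prop :=
  ∀ N : Submodule R M, ∃ K L : Submodule R M,
    K ⊔ L = ⊤ ∧ K ⊓ L = ⊥ ∧ K ≤ N ∧ IsSmallIn (N ⊓ L) L

theorem isLifting_of_orderIso {R M R' M' : Type*} [CommRing R] [AddCommGroup M] [Module R M]
    [CommRing R'] [AddCommGroup M'] [Module R' M'] (e : Submodule R M ≃o Submodule R' M')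
    (h : IsLiftingModule R M) : IsLiftingModule R' M' := by
  intro N
  obtain ⟨K, L, h1, h2, h3, h4⟩ := h (e.symm N)
  refine ⟨e K, e L, ?_, ?_, ?_, ?_⟩
  · rw [← map_sup, h1, e.map_top]
  · rw [← map_inf, h2, e.map_bot]
  · exact (e.le_symm_apply).1 h3
  · intro Y hY hE
    refine h4 (e.symm Y) (by rw [← e.lt_iff_lt]; simpa using hY) ?_
    apply e.injective
    simpa using hE

theorem isLifting_iff_localized {R : Type*} [CommRing R] {M : Type*} [AddCommGroup M]
    [Module R M] (S : Submonoid R)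
    (hcol : ∀ K : Submodule R M, K ≠ ⊤ → ∀ s ∈ S, {x : M | s • x ∈ K} = (K : Set M)) :
    IsLiftingModule R M ↔ IsLiftingModule (Localization S) (LocalizedModule S M) := by
  have hc : ∀ (K : Submodule R M) (s : S) (x : M), s • x ∈ K → x ∈ K := by
    intro K s x hx
    by_cases hK : K = ⊤
    · simp [hK]
    · have := hcol K hK s s.2
      have h2 : x ∈ {x : M | (s : R) • x ∈ K} := hx
      rw [this] at h2
      exact h2
  let f := LocalizedModule.mkLinearMap S M
  let g : Submodule (Localization S) (LocalizedModule S M) → Submodule R M :=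
    fun N => (N.restrictScalars R).comap f
  have hle : ∀ N N', g N ≤ g N' ↔ N ≤ N' := by
    intro N N'
    constructor
    · intro h x hx
      induction x using LocalizedModule.induction_on with
      | h m s =>
        have h1 : f m ∈ N := by
          have : f m = (algebraMap R (Localization S) s) • LocalizedModule.mk m s := by
            rw [algebraMap_smul]
            simp [f, LocalizedModule.mkLinearMap_apply, LocalizedModule.smul'_mk]
            exact (LocalizedModule.mk_cancel s m).symm
          rw [this]; exact N.smul_mem _ hx
        have h2 : f m ∈ N' := h h1
        have : LocalizedModule.mk m s = (Localization.mk 1 s) • f m := by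
          simp [f, LocalizedModule.mkLinearMap_apply, LocalizedModule.mk_smul_mk]
        rw [this]; exact N'.smul_mem _ h2
    · intro h x hx
      exact h hx
  have hsurj : Function.Surjective g := by
    intro K
    refine ⟨Submodule.localized' (Localization S) S f K, ?_⟩
    ext x
    change f x ∈ Submodule.localized' (Localization S) S f K ↔ _
    constructor
    · intro h
      rw [Submodule.mem_localized'] at h
      obtain ⟨m, hm, s, h⟩ := h
      rw [IsLocalizedModule.mk'_eq_iff, ← LinearMap.map_smul_of_tower] at h
      obtain ⟨u, hu⟩ := (IsLocalizedModule.eq_iff_exists S f).1 h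
      apply hc K s
      apply hc K u
      rw [← hu]
      exact K.smul_mem _ hm
    · intro h
      rw [Submodule.mem_localized']
      exact ⟨x, h, 1, by simp⟩
  let e : Submodule (Localization S) (LocalizedModule S M) ≃o Submodule R M :=
    RelIso.ofSurjective (OrderEmbedding.ofMapLEIff g hle) hsurj
  exact ⟨isLifting_of_orderIso e.symm, isLifting_of_orderIso e⟩
end
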